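/- Let k be a field, n a positive natural number, and R = k[[X_0,…,X_{n−1}]] the ring of formal power series in n variables over k. Let a, b : Fin n → ℕ both be nonzero. Then the radical of the ideal (X^a, X^b) of R equals the intersection, over all pairs of indices (i, j) with a_i > 0 and b_j > 0, of the ideals (X_i, X_j). -/

import Mathlib

/-- The part of a power series supported on monomials free of `X i` and `X j`. -/
noncomputable def killFun (k : Type*) [Field k] (n : ℕ) (i j : Fin n)
    (f : MvPowerSeries (Fin n) k) : MvPowerSeries (Fin n) k :=
  fun m => if m i = 0 ∧ m j = 0 then MvPowerSeries.coeff m f else 0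

theorem coeff_killFun (k : Type*) [Field k] (n : ℕ) (i j : Fin n)
    (f : MvPowerSeries (Fin n) k) (m : Fin n →₀ ℕ) :
    MvPowerSeries.coeff m (killFun k n i j f) =
      if m i = 0 ∧ m j = 0 then MvPowerSeries.coeff m f else 0 := rfl

open MvPowerSeries in
/-- Set the variables `X i` and `X j` to zero. -/
noncomputable def killTwo (k : Type*) [Field k] (n : ℕ) (i j : Fin n) :
    MvPowerSeries (Fin n) k →+* MvPowerSeries (Fin n) k where
  toFun := killFun k n i j
  map_one' := by
    classical
    ext m
    rw [coeff_killFun, coeff_one]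
    split_ifs with h1 h2 h2 <;> simp_all
  map_zero' := by
    ext m
    rw [coeff_killFun]
    simp
  map_add' f g := by
    ext m
    rw [map_add, coeff_killFun, coeff_killFun, coeff_killFun]
    split_ifs <;> simp
  map_mul' f g := by
    classical
    ext m
    rw [coeff_killFun, coeff_mul, coeff_mul]
    simp only [coeff_killFun]
    split_ifs with h
    · refine Finset.sum_congr rfl fun p hp => ?_
      rw [Finset.HasAntidiagonal.mem_antidiagonal] at hp
      subst hp
      simp only [Finsupp.add_apply] at h
      rw [if_pos (by omega), if_pos (by omega)]
    · symm
      refine Finset.sum_eq_zero fun p hp => ?_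
      rw [Finset.HasAntidiagonal.mem_antidiagonal] at hp
      subst hp
      simp only [Finsupp.add_apply] at h
      by_cases h1 : p.1 i = 0 ∧ p.1 j = 0
      · rw [if_neg (c := p.2 i = 0 ∧ p.2 j = 0) (by omega), mul_zero]
      · rw [if_neg h1, zero_mul]

open MvPowerSeries in
theorem coeff_killTwo (k : Type*) [Field k] (n : ℕ) (i j : Fin n)
    (f : MvPowerSeries (Fin n) k) (m : Fin n →₀ ℕ) :
    coeff m (killTwo k n i j f) = if m i = 0 ∧ m j = 0 then coeff m f else 0 := rfl

open MvPowerSeries in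
theorem ker_killTwo (k : Type*) [Field k] (n : ℕ) (i j : Fin n) :
    RingHom.ker (killTwo k n i j) = Ideal.span {X i, X j} := by
  classical
  apply le_antisymm
  · intro f hf
    rw [RingHom.mem_ker] at hf
    let g : MvPowerSeries (Fin n) k := fun m => if m i = 0 then 0 else coeff m f
    have hg : ∀ m, coeff m g = if m i = 0 then 0 else coeff m f := fun m => rfl
    have h1 : X i ∣ g := by
      rw [X_dvd_iff]
      intro m hm
      rw [hg, if_pos hm]
    have h2 : X j ∣ f - g := by
      rw [X_dvd_iff]
      intro m hm
      rw [map_sub, hg]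
      split_ifs with h
      · have := coeff_killTwo k n i j f m
        rw [hf, if_pos ⟨h, hm⟩] at this
        simpa using this.symm
      · simp
    obtain ⟨c, hc⟩ := h1
    obtain ⟨d, hd⟩ := h2
    rw [Ideal.mem_span_pair]
    exact ⟨c, d, by rw [mul_comm c, mul_comm d, ← hc, ← hd]; ring⟩
  · rw [Ideal.span_le]
    rintro x (rfl | rfl) <;>
    · rw [SetLike.mem_coe, RingHom.mem_ker]
      ext m
      rw [coeff_killTwo, coeff_X]
      split_ifs with h1 h2 <;> simp_all

theorem span_X_pair_isPrime (k : Type*) [Field k] (n : ℕ) (i j : Fin n) :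
    (Ideal.span {(MvPowerSeries.X i : MvPowerSeries (Fin n) k), MvPowerSeries.X j}).IsPrime := by
  haveI : IsDomain (MvPowerSeries (Fin n) k) := NoZeroDivisors.to_isDomain _
  rw [← ker_killTwo]
  exact RingHom.ker_isPrime _

theorem exists_X_mem (k : Type*) [Field k] (n : ℕ) (a : Fin n → ℕ)
    (P : Ideal (MvPowerSeries (Fin n) k)) (hP : P.IsPrime)
    (h : ∏ i, (MvPowerSeries.X i : MvPowerSeries (Fin n) k) ^ a i ∈ P) :
    ∃ i, 0 < a i ∧ (MvPowerSeries.X i : MvPowerSeries (Fin n) k) ∈ P := by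
  obtain ⟨i, -, hi⟩ := (Ideal.IsPrime.prod_mem_iff).1 h
  refine ⟨i, Nat.pos_of_ne_zero fun h0 => ?_, hP.mem_of_pow_mem _ hi⟩
  rw [h0, pow_zero] at hi
  exact hP.ne_top ((Ideal.eq_top_iff_one _).2 hi)

theorem prod_mem_of_X_mem (k : Type*) [Field k] (n : ℕ) (a : Fin n → ℕ)
    (P : Ideal (MvPowerSeries (Fin n) k)) (i : Fin n) (hi : 0 < a i)
    (h : (MvPowerSeries.X i : MvPowerSeries (Fin n) k) ∈ P) :
    ∏ i, (MvPowerSeries.X i : MvPowerSeries (Fin n) k) ^ a i ∈ P :=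
  P.mem_of_dvd (Finset.dvd_prod_of_mem _ (Finset.mem_univ i)) (P.pow_mem_of_mem h _ hi)

/-- In `R = k[[X_0, …, X_{n-1}]]` over a field `k`, for nonzero `a b : Fin n → ℕ`,
the radical of `(X^a, X^b)` is the intersection, over all pairs `(i, j)` with
`a i > 0` and `b j > 0`, of the ideals `(X_i, X_j)`. -/
theorem stmt_11 (k : Type*) [Field k] (n : ℕ) (hn : 0 < n)
    (a b : Fin n → ℕ) (ha : a ≠ 0) (hb : b ≠ 0) :
    (Ideal.span {∏ i, (MvPowerSeries.X i : MvPowerSeries (Fin n) k) ^ a i,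
        ∏ i, (MvPowerSeries.X i : MvPowerSeries (Fin n) k) ^ b i}).radical =
      ⨅ i ∈ {i : Fin n | 0 < a i}, ⨅ j ∈ {j : Fin n | 0 < b j},
        Ideal.span {(MvPowerSeries.X i : MvPowerSeries (Fin n) k),
          MvPowerSeries.X j} := by
  apply le_antisymm
  · refine le_iInf₂ fun i hi => le_iInf₂ fun j hj => ?_
    refine (span_X_pair_isPrime k n i j).radical_le_iff.2 ?_
    rw [Ideal.span_le]
    rintro x (rfl | rfl)
    · exact prod_mem_of_X_mem k n a _ i hi (Ideal.subset_span (by simp))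
    · exact prod_mem_of_X_mem k n b _ j hj (Ideal.subset_span (by simp))
  · rw [Ideal.radical_eq_sInf]
    refine le_sInf ?_
    rintro P ⟨hle, hP⟩
    obtain ⟨i, hi, hiP⟩ := exists_X_mem k n a P hP (hle (Ideal.subset_span (by simp)))
    obtain ⟨j, hj, hjP⟩ := exists_X_mem k n b P hP (hle (Ideal.subset_span (by simp)))
    refine (iInf₂_le i hi).trans ((iInf₂_le j hj).trans ?_)
    rw [Ideal.span_le]
    rintro x (rfl | rfl) <;> assumption
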